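/- Let D be a digraph on vertex type V and v ∈ V a vertex having at least one predecessor (some x ≠ v with Adj_D x v) and at least one successor (some y ≠ v with Adj_D v y). If the bypass D↑↑v is strongly connected (for all x, y in V \ {v} there is a path in D↑↑v from x to y), then D is strongly connected (for all x, y in V there is a path in D from x to y). -/

import Mathlib

/-- The detour of a digraph (irreflexive relation) `A` at a vertex `v`. -/
def detour {V : Type*} (A : V → V → Prop) (v : V) : V → V → Prop :=
  fun x y => x ≠ v ∧ y ≠ v ∧ x ≠ y ∧ (A x y ∨ (A x v ∧ A v y))

/-- The bypass of `A` at `v`: the induced subdigraph of `detour A v` on `V \ {v}`. -/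
def bypass {V : Type*} (A : V → V → Prop) (v : V) :
    {x : V // x ≠ v} → {x : V // x ≠ v} → Prop :=
  fun x y => detour A v x.val y.val

section Reachability

open Relation

variable {V : Type*} {A : V → V → Prop} {v : V}

theorem reflTransGen_of_detour {x y : V} (h : detour A v x y) : ReflTransGen A x y := by
  obtain ⟨-, -, -, hxy | ⟨hxv, hvy⟩⟩ := h
  · exact .single hxy
  · exact .head hxv (.single hvy)

theorem reflTransGen_of_reflTransGen_bypass {x y : {z : V // z ≠ v}}
    (h : ReflTransGen (bypass A v) x y) : ReflTransGen A x.val y.val :=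
  h.lift' Subtype.val fun _ _ => reflTransGen_of_detour

theorem reflTransGen_to_of_forall_ne {p : V} (hpv : ReflTransGen A p v)
    (hp : ∀ x ≠ v, ReflTransGen A x p) (x : V) : ReflTransGen A x v := by
  obtain rfl | hx := eq_or_ne x v
  · exact .refl
  · exact (hp x hx).trans hpv

theorem reflTransGen_from_of_forall_ne {s : V} (hvs : ReflTransGen A v s)
    (hs : ∀ y ≠ v, ReflTransGen A s y) (y : V) : ReflTransGen A v y := by
  obtain rfl | hy := eq_or_ne y v
  · exact .refl
  · exact hvs.trans (hs y hy)

end Reachability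

/-- If `v` has a predecessor and a successor and the bypass `D↑↑v` is strongly
connected, then `D` is strongly connected. -/
theorem strongly_connected_of_bypass {V : Type*} (A : V → V → Prop) (hA : Irreflexive A)
    (v : V)
    (hpred : ∃ x, x ≠ v ∧ A x v) (hsucc : ∃ y, y ≠ v ∧ A v y)
    (hsc : ∀ x y : {z : V // z ≠ v}, Relation.ReflTransGen (bypass A v) x y) :
    ∀ x y : V, Relation.ReflTransGen A x y := by
  obtain ⟨p, hp, hpv⟩ := hpred
  obtain ⟨s, hs, hvs⟩ := hsucc
  have off_v : ∀ x ≠ v, ∀ y ≠ v, Relation.ReflTransGen A x y := fun x hx y hy =>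
    reflTransGen_of_reflTransGen_bypass (hsc ⟨x, hx⟩ ⟨y, hy⟩)
  have to_v : ∀ x, Relation.ReflTransGen A x v :=
    reflTransGen_to_of_forall_ne (.single hpv) fun x hx => off_v x hx p hp
  have from_v : ∀ y, Relation.ReflTransGen A v y :=
    reflTransGen_from_of_forall_ne (.single hvs) (off_v s hs)
  exact fun x y => (to_v x).trans (from_v y)
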